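/- arXiv:2403.15259 — 2 statements merged into one kernel-verified Lean document; each statement's English description precedes it below -/
import Mathlib

section
/- Let E be an ordered Polish space and P a monotone Markov kernel on E. Suppose that for any x, y ∈ E there exist Borel sets A_{x,y} and B_{x,y} with A_{x,y} ⪯ B_{x,y} such that the hitting times τˣ = inf{n ≥ 0 : Xₙˣ ∈ A_{x,y}} and τʸ = inf{n ≥ 0 : Xₙʸ ∈ B_{x,y}} are both finite almost surely. Then P possesses at most one stationary distribution. -/
open MeasureTheory ProbabilityTheory Filter Topology

/-- `μ` is *stochastically smaller* than `ν` (written `μ ⪯ ν` in the paper):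
`μ I ≤ ν I` for every Borel increasing (upper) set `I`. -/
def StochDom {E : Type*} [MeasurableSpace E] [Preorder E] (μ ν : Measure E) : Prop :=
  ∀ I : Set E, MeasurableSet I → IsUpperSet I → μ I ≤ ν I

/-- A Markov kernel `P` is *(stochastically) monotone* if for every bounded monotone
measurable `g : E → [0,1]` the map `x ↦ ∫ g dP(x)` is again monotone. -/
def MonotoneKernel {E : Type*} [MeasurableSpace E] [Preorder E] (P : Kernel E E) : Prop :=
  ∀ g : E → ℝ, Measurable g → Monotone g → (∀ x, g x ∈ Set.Icc (0 : ℝ) 1) →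
    Monotone fun x => ∫ y, g y ∂(P x)

/-- The `n`-step transition kernel `P⁽ⁿ⁾` of a Markov kernel `P`;
`kpow P n x` is the law of `Xₙˣ`, the chain with kernel `P` started at `x`. -/
noncomputable def kpow {E : Type*} [MeasurableSpace E] (P : Kernel E E) : ℕ → Kernel E E
  | 0 => Kernel.id
  | n + 1 => P.comp (kpow P n)

/-- The process `Z` on `(Ω, μ)` is a (possibly time-inhomogeneous) Markov chain with
one-step kernels `Q n`, expressed through finite-dimensional distributions: for every
bounded measurable cylinder functional `φ` of the past and every Borel set `A`,
`E[φ(Z₀,…,Zₙ) · 1_A(Z_{n+1})] = E[φ(Z₀,…,Zₙ) · (Q n)(Zₙ, A)]`. -/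
def MCStep {Ω S : Type*} [MeasurableSpace Ω] [MeasurableSpace S]
    (μ : Measure Ω) (Q : ℕ → Kernel S S) (Z : ℕ → Ω → S) : Prop :=
  ∀ (n : ℕ) (A : Set S), MeasurableSet A →
    ∀ φ : (Fin (n + 1) → S) → ℝ, Measurable φ → (∀ v, φ v ∈ Set.Icc (0 : ℝ) 1) →
      ∫ ω, φ (fun i => Z i.1 ω) * A.indicator (fun _ => (1 : ℝ)) (Z (n + 1) ω) ∂μ
        = ∫ ω, φ (fun i => Z i.1 ω) * ((Q n) (Z n ω) A).toReal ∂μ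

/-- `X` on `(Ω, μ)` is a time-homogeneous Markov chain with kernel `P` started at `x`. -/
def IsMChain {E Ω : Type*} [MeasurableSpace E] [MeasurableSpace Ω]
    (P : Kernel E E) (x : E) (μ : Measure Ω) (X : ℕ → Ω → E) : Prop :=
  IsProbabilityMeasure μ ∧ (∀ n, Measurable (X n)) ∧ (∀ᵐ ω ∂μ, X 0 ω = x) ∧
    MCStep μ (fun _ => P) X

/-- A *Markovian coupling* of two chains with kernel `P` started at `x` and `y`:
both coordinates are Markov chains with kernel `P` and the pair process is itself a
(possibly time-inhomogeneous) Markov chain. -/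
def IsMarkovianCoupling {E Ω : Type*} [MeasurableSpace E] [MeasurableSpace Ω]
    (P : Kernel E E) (x y : E) (μ : Measure Ω) (X Y : ℕ → Ω → E) : Prop :=
  IsMChain P x μ X ∧ IsMChain P y μ Y ∧
    ∃ Q : ℕ → Kernel (E × E) (E × E), (∀ n, IsMarkovKernel (Q n)) ∧
      MCStep μ Q fun n ω => (X n ω, Y n ω)

/-- A set `H ⊆ E × E` is *achievable* for the kernel `P` if for all `x, y` there is a
Markovian coupling of the chains started at `x` and `y` whose hitting time of `H`
is finite almost surely. -/
def Achievable {E : Type*} [MeasurableSpace E] (P : Kernel E E) (H : Set (E × E)) : Prop :=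
  ∀ x y : E, ∃ (Ω : Type) (_ : MeasurableSpace Ω) (μ : Measure Ω) (X Y : ℕ → Ω → E),
    IsMarkovianCoupling P x y μ X Y ∧ ∀ᵐ ω ∂μ, ∃ n, (X n ω, Y n ω) ∈ H

/-- Condition (BMC): every increasing sequence bounded above by some element converges. -/
def BMC (E : Type*) [Preorder E] [TopologicalSpace E] : Prop :=
  ∀ (x : ℕ → E) (y : E), Monotone x → (∀ n, x n ≤ y) → ∃ l, Tendsto x atTop (nhds l)

/-- The ordered metric space `E` is *normal*: there is a continuous `h : [0,∞) → [0,∞)`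
with `h 0 = 0` such that `x ⪯ y ⪯ z` implies `d(x,y) ≤ h (d(x,z))`. -/
def NormalOrdered (E : Type*) [PseudoMetricSpace E] [Preorder E] : Prop :=
  ∃ h : ℝ → ℝ, ContinuousOn h (Set.Ici 0) ∧ h 0 = 0 ∧ (∀ t ≥ (0 : ℝ), 0 ≤ h t) ∧
    ∀ x y z : E, x ≤ y → y ≤ z → dist x y ≤ h (dist x z)

/-- Condition (PR): there are `x₀ ⪯ y₀` such that the hitting times
`ν⁻ = min {n ≥ 1 : Xₙ^{x₀} ⪰ x₀}` and `ν⁺ = min {n ≥ 1 : Xₙ^{y₀} ⪯ y₀}`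
have finite expectations. -/
def PRCond {E : Type*} [MeasurableSpace E] [Preorder E] (P : Kernel E E) : Prop :=
  ∃ x₀ y₀ : E, x₀ ≤ y₀ ∧
    (∃ (Ω : Type) (_ : MeasurableSpace Ω) (μ : Measure Ω) (X : ℕ → Ω → E),
      IsMChain P x₀ μ X ∧ (∀ᵐ ω ∂μ, ∃ n, 1 ≤ n ∧ x₀ ≤ X n ω) ∧
      Integrable (fun ω => ((sInf {n : ℕ | 1 ≤ n ∧ x₀ ≤ X n ω} : ℕ) : ℝ)) μ) ∧
    (∃ (Ω : Type) (_ : MeasurableSpace Ω) (μ : Measure Ω) (X : ℕ → Ω → E),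
      IsMChain P y₀ μ X ∧ (∀ᵐ ω ∂μ, ∃ n, 1 ≤ n ∧ X n ω ≤ y₀) ∧
      Integrable (fun ω => ((sInf {n : ℕ | 1 ≤ n ∧ X n ω ≤ y₀} : ℕ) : ℝ)) μ)

theorem exists_upper_sep {E : Type*} [TopologicalSpace E] [PolishSpace E] [MeasurableSpace E]
    [BorelSpace E] [PartialOrder E] [OrderClosedTopology E] (U V : Set E)
    (hU : MeasurableSet U) (hV : MeasurableSet V) (hUV : ∀ u ∈ U, ∀ v ∈ V, ¬ u ≤ v) :
    ∃ J : Set E, MeasurableSet J ∧ IsUpperSet J ∧ U ⊆ J ∧ Disjoint J V := by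
  have hM : MeasurableSet {p : E × E | p.1 ≤ p.2} :=
    (isClosed_le continuous_fst continuous_snd).measurableSet
  -- analytic closures
  have hup : ∀ C : Set E, MeasurableSet C →
      MeasureTheory.AnalyticSet (Prod.snd '' ({p : E × E | p.1 ≤ p.2} ∩ Prod.fst ⁻¹' C)) := fun C hC =>
    ((hM.inter (measurable_fst hC)).analyticSet).image_of_continuous continuous_snd
  have hdn : MeasureTheory.AnalyticSet (Prod.fst '' ({p : E × E | p.1 ≤ p.2} ∩ Prod.snd ⁻¹' V)) :=
    ((hM.inter (measurable_snd hV)).analyticSet).image_of_continuous continuous_fst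
  have step : ∀ C : {C : Set E // MeasurableSet C ∧ ∀ u ∈ C, ∀ v ∈ V, ¬ u ≤ v},
      ∃ D : {C : Set E // MeasurableSet C ∧ ∀ u ∈ C, ∀ v ∈ V, ¬ u ≤ v},
        ∀ x ∈ C.1, ∀ y, x ≤ y → y ∈ D.1 := by
    rintro ⟨C, hC, hCV⟩
    have hdisj : Disjoint (Prod.snd '' ({p : E × E | p.1 ≤ p.2} ∩ Prod.fst ⁻¹' C))
        (Prod.fst '' ({p : E × E | p.1 ≤ p.2} ∩ Prod.snd ⁻¹' V)) := by
      rw [Set.disjoint_left]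
      rintro z ⟨⟨a, b⟩, ⟨hab, ha⟩, rfl⟩ ⟨⟨c, d⟩, ⟨hcd, hd⟩, hcb⟩
      simp only [Set.mem_ofPred_eq, Set.mem_preimage] at hab ha hcd hd hcb
      subst hcb
      exact hCV a ha d hd (hab.trans hcd)
    obtain ⟨D, h1, h2, h3⟩ := (hup C hC).measurablySeparable hdn hdisj
    refine ⟨⟨D, h3, ?_⟩, ?_⟩
    · intro u hu v hv huv
      exact Set.disjoint_left.1 h2 ⟨(u, v), ⟨huv, hv⟩, rfl⟩ hu
    · intro x hx y hxy
      exact h1 ⟨(x, y), ⟨hxy, hx⟩, rfl⟩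
  choose F hF using step
  let S : ℕ → {C : Set E // MeasurableSet C ∧ ∀ u ∈ C, ∀ v ∈ V, ¬ u ≤ v} :=
    fun n => F^[n] ⟨U, hU, hUV⟩
  have hS : ∀ n, S (n + 1) = F (S n) := fun n => Function.iterate_succ_apply' F n _
  refine ⟨⋃ n, (S n).1, MeasurableSet.iUnion fun n => (S n).2.1, ?_, ?_, ?_⟩
  · intro a b hab ha
    obtain ⟨n, hn⟩ := Set.mem_iUnion.1 ha
    refine Set.mem_iUnion.2 ⟨n + 1, ?_⟩
    rw [hS]
    exact hF _ a hn b hab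
  · exact Set.subset_iUnion (fun n => (S n).1) 0
  · rw [Set.disjoint_left]
    intro a ha hv
    obtain ⟨n, hn⟩ := Set.mem_iUnion.1 ha
    exact (S n).2.2 a hn a hv le_rfl

theorem exists_countable_upper {E : Type*} [TopologicalSpace E] [PolishSpace E]
    [MeasurableSpace E] [BorelSpace E] [PartialOrder E] [OrderClosedTopology E] :
    ∃ S : Set (Set E), S.Countable ∧ (∀ s ∈ S, MeasurableSet s ∧ IsUpperSet s) ∧
      ∀ x y : E, (∀ s ∈ S, x ∈ s ↔ y ∈ s) → x = y := by
  let b := TopologicalSpace.countableBasis E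
  have hb : TopologicalSpace.IsTopologicalBasis b := TopologicalSpace.isBasis_countableBasis E
  have hbc : b.Countable := TopologicalSpace.countable_countableBasis E
  have hex : ∀ p : Set E × Set E, ∃ J : Set E, MeasurableSet J ∧ IsUpperSet J ∧
      (p.1 ∈ b → p.2 ∈ b → (∀ u ∈ p.1, ∀ v ∈ p.2, ¬ u ≤ v) → p.1 ⊆ J ∧ Disjoint J p.2) := by
    intro p
    by_cases hp : p.1 ∈ b ∧ p.2 ∈ b ∧ (∀ u ∈ p.1, ∀ v ∈ p.2, ¬ u ≤ v)
    · obtain ⟨J, h1, h2, h3, h4⟩ := exists_upper_sep p.1 p.2 (hb.isOpen hp.1).measurableSet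
        (hb.isOpen hp.2.1).measurableSet hp.2.2
      exact ⟨J, h1, h2, fun _ _ _ => ⟨h3, h4⟩⟩
    · exact ⟨∅, MeasurableSet.empty, isUpperSet_empty, fun h1 h2 h3 => absurd ⟨h1, h2, h3⟩ hp⟩
  choose J hJm hJu hJ using hex
  have key : ∀ x y : E, (∀ s ∈ J '' (b ×ˢ b), x ∈ s ↔ y ∈ s) → x ≤ y := by
    intro x y hxy
    by_contra hn
    have hop : IsOpen {p : E × E | ¬ p.1 ≤ p.2} :=
      (isClosed_le continuous_fst continuous_snd).isOpen_compl
    obtain ⟨U, V, hU, hV, hx, hy, hUV⟩ := isOpen_prod_iff.1 hop x y hn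
    obtain ⟨U', hU', hxU', hUU'⟩ := hb.exists_subset_of_mem_open hx hU
    obtain ⟨V', hV', hyV', hVV'⟩ := hb.exists_subset_of_mem_open hy hV
    have h3 := hJ (U', V') hU' hV' (fun u hu v hv => hUV (Set.mk_mem_prod (hUU' hu) (hVV' hv)))
    have h4 := hxy (J (U', V')) ⟨(U', V'), ⟨hU', hV'⟩, rfl⟩
    exact Set.disjoint_left.1 h3.2 (h4.1 (h3.1 hxU')) hyV'
  refine ⟨J '' (b ×ˢ b), (hbc.prod hbc).image _, ?_, fun x y hxy =>
    le_antisymm (key x y hxy) (key y x fun s hs => (hxy s hs).symm)⟩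
  rintro s ⟨p, -, rfl⟩
  exact ⟨hJm p, hJu p⟩

theorem generateFrom_of_sep {E : Type*} (m m' : MeasurableSpace E) (hst : @StandardBorelSpace E m)
    (hle : m' ≤ m) (hsep : @MeasurableSpace.CountablySeparated E m') : m = m' := by
  have hemb : @MeasurableEmbedding E E m m' id :=
    @Measurable.measurableEmbedding E E m' id hsep m hst (measurable_id'' hle)
      Function.injective_id
  refine le_antisymm (fun s hs => ?_) hle
  have h2 := @MeasurableEmbedding.measurableSet_image' E E m m' id hemb s hs
  rwa [Set.image_id] at h2

theorem borel_eq_generateFrom_upper {E : Type*} [TopologicalSpace E] [PolishSpace E]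
    [m : MeasurableSpace E] [BorelSpace E] [PartialOrder E] [OrderClosedTopology E] :
    m = MeasurableSpace.generateFrom {J : Set E | MeasurableSet J ∧ IsUpperSet J} := by
  obtain ⟨S, hS, hS1, hS2⟩ := exists_countable_upper (E := E)
  refine generateFrom_of_sep _ _ inferInstance
    (MeasurableSpace.generateFrom_le fun J hJ => hJ.1) ?_
  exact @MeasurableSpace.CountablySeparated.mk E (MeasurableSpace.generateFrom _) ⟨S, hS, fun s hs =>
    MeasurableSpace.measurableSet_generateFrom (hS1 s hs), fun x _ y _ hxy => hS2 x y hxy⟩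

theorem ext_upper {E : Type*} [TopologicalSpace E] [PolishSpace E]
    [MeasurableSpace E] [BorelSpace E] [PartialOrder E] [OrderClosedTopology E]
    (μ ν : Measure E) [IsProbabilityMeasure μ] [IsProbabilityMeasure ν]
    (h : ∀ J : Set E, MeasurableSet J → IsUpperSet J → μ J = ν J) : μ = ν := by
  refine ext_of_generate_finite _ borel_eq_generateFrom_upper ?_ (fun J hJ => h J hJ.1 hJ.2)
    (by simp)
  intro s hs t ht _
  exact ⟨hs.1.inter ht.1, hs.2.inter ht.2⟩

theorem integral_bind_kernel {E : Type*} [MeasurableSpace E] (P : Kernel E E) [IsMarkovKernel P]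
    (ρ : Measure E) [IsFiniteMeasure ρ] (v : E → ℝ) (hv : Measurable v)
    (hv1 : ∀ x, v x ∈ Set.Icc (0 : ℝ) 1) :
    ∫ x, v x ∂(ρ.bind (fun a => P a)) = ∫ x, ∫ y, v y ∂(P x) ∂ρ := by
  have h := Kernel.integral_comp (κ := Kernel.const Unit ρ) (η := P) (a := ()) (f := v)
    (Integrable.of_mem_Icc 0 1 hv.aemeasurable (ae_of_all _ hv1))
  rw [Kernel.comp_apply, Kernel.const_apply] at h
  exact h

theorem chain_step {E Ω : Type*} [MeasurableSpace E] [MeasurableSpace Ω]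
    (P : Kernel E E) [IsMarkovKernel P] (x : E) (μ : Measure Ω) (X : ℕ → Ω → E)
    (hX : IsMChain P x μ X) (n : ℕ) (T : Set (Fin (n + 1) → E)) (hT : MeasurableSet T)
    (v : E → ℝ) (hv : Measurable v) (hv1 : ∀ x, v x ∈ Set.Icc (0 : ℝ) 1) :
    ∫ ω in {ω | (fun i : Fin (n + 1) => X i.1 ω) ∈ T}, v (X (n + 1) ω) ∂μ
      = ∫ ω in {ω | (fun i : Fin (n + 1) => X i.1 ω) ∈ T}, ∫ y, v y ∂(P (X n ω)) ∂μ := by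
  obtain ⟨hμ, hXm, -, hstep⟩ := hX
  set S := {ω | (fun i : Fin (n + 1) => X i.1 ω) ∈ T} with hS
  have hSm : MeasurableSet S := (measurable_pi_lambda _ fun i => hXm _) hT
  have heq : (μ.restrict S).map (X (n + 1)) = ((μ.restrict S).map (X n)).bind (fun a => P a) := by
    ext A hA
    have h1 := hstep n A hA (T.indicator fun _ => 1) (measurable_const.indicator hT)
      (fun v => by by_cases hv : v ∈ T <;> simp [hv])
    rw [Measure.map_apply (hXm _) hA, Measure.bind_apply hA P.measurable.aemeasurable,
      lintegral_map (Kernel.measurable_coe P hA) (hXm n)]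
    have hPm : Measurable fun ω => P (X n ω) A := (Kernel.measurable_coe P hA).comp (hXm n)
    have e1 : ∀ ω, T.indicator (fun _ => (1 : ℝ)) (fun i : Fin (n + 1) => X i.1 ω) *
        A.indicator (fun _ => (1 : ℝ)) (X (n + 1) ω)
        = S.indicator (fun ω => (X (n + 1) ⁻¹' A).indicator (fun _ => (1 : ℝ)) ω) ω := by
      intro ω
      by_cases h : (fun i : Fin (n + 1) => X i.1 ω) ∈ T <;>
      by_cases h' : X (n + 1) ω ∈ A <;> simp [hS, h, h', Set.indicator]
    have e2 : ∀ ω, T.indicator (fun _ => (1 : ℝ)) (fun i : Fin (n + 1) => X i.1 ω) *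
        (P (X n ω) A).toReal
        = S.indicator (fun ω => (P (X n ω) A).toReal) ω := by
      intro ω
      by_cases h : (fun i : Fin (n + 1) => X i.1 ω) ∈ T <;> simp [hS, h, Set.indicator]
    simp_rw [e1, e2] at h1
    rw [integral_indicator hSm, integral_indicator hSm, integral_indicator_const _ (hXm _ hA),
      integral_toReal hPm.aemeasurable (ae_of_all _ fun ω => measure_lt_top _ _)] at h1
    simp only [smul_eq_mul, mul_one, Measure.real] at h1
    refine (ENNReal.toReal_eq_toReal_iff' (measure_ne_top _ _) ?_).1 h1
    refine ne_of_lt (lt_of_le_of_lt (lintegral_mono fun ω => prob_le_one) ?_)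
    simp [measure_lt_top]
  have hI := integral_bind_kernel P ((μ.restrict S).map (X n)) v hv hv1
  rw [← heq, integral_map (hXm _).aemeasurable hv.aestronglyMeasurable,
    integral_map (hXm _).aemeasurable
      (hv.stronglyMeasurable.integral_kernel).aestronglyMeasurable] at hI
  exact hI

/-- Not having hit `A` up to time `j`. -/
def noHit {E Ω : Type*} (X : ℕ → Ω → E) (A : Set E) (j : ℕ) : Set Ω := {ω | ∀ i ≤ j, X i ω ∉ A}

theorem noHit_meas {E Ω : Type*} [MeasurableSpace E] [MeasurableSpace Ω] (X : ℕ → Ω → E)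
    (hX : ∀ n, Measurable (X n)) (A : Set E) (hA : MeasurableSet A) (j : ℕ) :
    MeasurableSet (noHit X A j) := by
  have : noHit X A j = ⋂ i : ℕ, ⋂ _ : i ≤ j, X i ⁻¹' Aᶜ := by
    ext ω; simp [noHit]
  rw [this]
  exact MeasurableSet.iInter fun i => MeasurableSet.iInter fun _ => hX i hA.compl

theorem chain_bound {E Ω : Type*} [MeasurableSpace E] [MeasurableSpace Ω]
    (P : Kernel E E) [IsMarkovKernel P] (x : E) (μ : Measure Ω) (X : ℕ → Ω → E)
    (hX : IsMChain P x μ X) (A : Set E) (hA : MeasurableSet A)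
    (v : E → ℝ) (hv : Measurable v) (hv1 : ∀ x, v x ∈ Set.Icc (0 : ℝ) 1)
    (c δ : ℝ) (hc : 0 ≤ c) (hδ : 0 ≤ δ) (hAc : ∀ a ∈ A, v a ≤ c)
    (hP : ∀ z, v z - δ ≤ ∫ y, v y ∂(P z)) (m : ℕ) :
    v x ≤ c + m * δ + μ.real (noHit X A m) := by
  have hX' := hX
  obtain ⟨hμ, hXm, hX0, -⟩ := hX
  have hint : ∀ j k, IntegrableOn (fun ω => v (X k ω)) (noHit X A j) μ := fun j k =>
    Integrable.of_mem_Icc 0 1 (hv.comp (hXm k)).aemeasurable (ae_of_all _ fun ω => hv1 _)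
  have hintc : ∀ j k, IntegrableOn (fun ω => v (X k ω) - c) (noHit X A j) μ := fun j k =>
    (hint j k).sub (integrable_const c)
  have hPm : Measurable fun z => ∫ y, v y ∂(P z) :=
    (hv.stronglyMeasurable.integral_kernel).measurable
  have hP1 : ∀ z, ∫ y, v y ∂(P z) ∈ Set.Icc (0 : ℝ) 1 := fun z =>
    ⟨integral_nonneg fun y => (hv1 y).1, by
      calc ∫ y, v y ∂(P z) ≤ ∫ y, (1 : ℝ) ∂(P z) :=
            integral_mono (Integrable.of_mem_Icc 0 1 hv.aemeasurable (ae_of_all _ hv1))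
              (integrable_const _) fun y => (hv1 y).2
        _ = 1 := by simp⟩
  have claim : ∀ j : ℕ, v x - c - j * δ ≤ ∫ ω in noHit X A j, (v (X j ω) - c) ∂μ := by
    intro j
    induction j with
    | zero =>
      by_cases hx : x ∈ A
      · have : ∫ ω in noHit X A 0, (v (X 0 ω) - c) ∂μ = 0 := by
          have h0 : μ (noHit X A 0) = 0 := by
            refine measure_mono_null (t := {ω | ¬ X 0 ω = x}) (fun ω hω h0 => ?_) hX0
            exact hω 0 le_rfl (by rw [show X 0 ω = x from h0]; exact hx)
          rw [Measure.restrict_eq_zero.2 h0]; simp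
        rw [this]; have := hAc x hx; simp; linarith
      · have : ∫ ω in noHit X A 0, (v (X 0 ω) - c) ∂μ = v x - c := by
          have h0 : noHit X A 0 =ᵐ[μ] Set.univ := by
            rw [eventuallyEq_univ]
            filter_upwards [hX0] with ω h0 i hi
            obtain rfl : i = 0 := by omega
            rw [h0]; exact hx
          rw [setIntegral_congr_set h0, setIntegral_univ]
          rw [integral_congr_ae (g := fun _ => v x - c)]
          · simp
          · filter_upwards [hX0] with ω h0
            rw [h0]
        rw [this]; simp
    | succ j ih =>
      have s1 : ∫ ω in noHit X A j, v (X (j + 1) ω) ∂μ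
          = ∫ ω in noHit X A j, ∫ y, v y ∂(P (X j ω)) ∂μ := by
        have hT : MeasurableSet {u : Fin (j + 1) → E | ∀ i, u i ∉ A} := by
          have : {u : Fin (j + 1) → E | ∀ i, u i ∉ A} = ⋂ i, (fun u => u i) ⁻¹' Aᶜ := by
            ext u; simp
          rw [this]
          exact MeasurableSet.iInter fun i => measurable_pi_apply i hA.compl
        have := chain_step P x μ X hX' j _ hT v hv hv1
        have hset : {ω | (fun i : Fin (j + 1) => X i.1 ω) ∈ {u : Fin (j + 1) → E | ∀ i, u i ∉ A}}
            = noHit X A j := by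
          ext ω
          simp only [Set.mem_ofPred_eq, noHit]
          exact ⟨fun h i hi => h ⟨i, by omega⟩, fun h i => h i.1 (by omega)⟩
        rwa [hset] at this
      have s2 : ∫ ω in noHit X A j, (v (X j ω) - δ) ∂μ ≤
          ∫ ω in noHit X A j, ∫ y, v y ∂(P (X j ω)) ∂μ :=
        integral_mono ((hint j j).sub (integrable_const δ))
          (Integrable.of_mem_Icc 0 1 (hPm.comp (hXm j)).aemeasurable
            (ae_of_all _ fun ω => hP1 _)) fun ω => hP _
      have s3 : ∫ ω in noHit X A j, (v (X (j + 1) ω) - c) ∂μ ≤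
          ∫ ω in noHit X A (j + 1), (v (X (j + 1) ω) - c) ∂μ := by
        rw [← integral_indicator (noHit_meas X hXm A hA j),
          ← integral_indicator (noHit_meas X hXm A hA (j + 1))]
        refine integral_mono ((hintc _ _).integrable_indicator (noHit_meas X hXm A hA j))
          ((hintc _ _).integrable_indicator (noHit_meas X hXm A hA (j + 1))) fun ω => ?_
        by_cases h1 : ω ∈ noHit X A (j + 1)
        · have h2 : ω ∈ noHit X A j := fun i hi => h1 i (by omega)
          simp [h1, h2]
        · by_cases h2 : ω ∈ noHit X A j
          · have h3 : X (j + 1) ω ∈ A := by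
              by_contra h3
              refine h1 fun i hi => ?_
              rcases Nat.lt_or_ge j i with h | h
              · obtain rfl : i = j + 1 := by omega
                exact h3
              · exact h2 i h
            simp [h1, h2, hAc _ h3]
          · simp [h1, h2]
      have hμ1 : μ.real (noHit X A j) * δ ≤ δ := mul_le_of_le_one_left hδ measureReal_le_one
      rw [integral_sub (hint _ _) (integrable_const _)] at s2 s3 ih
      simp only [integral_const, measureReal_restrict_apply_univ, smul_eq_mul] at s2 s3 ih
      push_cast
      linarith
  have hlast : ∫ ω in noHit X A m, (v (X m ω) - c) ∂μ ≤ μ.real (noHit X A m) := by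
    calc _ ≤ ∫ ω in noHit X A m, (1 : ℝ) ∂μ :=
          integral_mono (hintc _ _) (integrable_const _) fun ω => by
            have := (hv1 (X m ω)).2; dsimp only; linarith
      _ = _ := by simp
  linarith [claim m]

theorem noHit_tendsto {E Ω : Type*} [MeasurableSpace E] [MeasurableSpace Ω] (μ : Measure Ω)
    [IsProbabilityMeasure μ] (X : ℕ → Ω → E)
    (hX : ∀ n, Measurable (X n)) (A : Set E) (hA : MeasurableSet A)
    (h : ∀ᵐ ω ∂μ, ∃ n, X n ω ∈ A) :
    Tendsto (fun j => μ.real (noHit X A j)) atTop (𝓝 0) := by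
  have h0 : μ (⋂ j, noHit X A j) = 0 := by
    refine measure_mono_null (fun ω hω => ?_) h
    rintro ⟨n, hn⟩
    exact Set.mem_iInter.1 hω n n le_rfl hn
  have := tendsto_measure_iInter_atTop (μ := μ)
    (fun j => (noHit_meas X hX A hA j).nullMeasurableSet)
    (fun i j hij ω hω k hk => hω k (hk.trans hij)) ⟨0, measure_ne_top _ _⟩
  rw [h0] at this
  exact (ENNReal.tendsto_toReal ENNReal.zero_ne_top).comp this

theorem ces_diff_le {E : Type*} [MeasurableSpace E] [PartialOrder E]
    (P : Kernel E E) [IsMarkovKernel P]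
    (v : ℕ → E → ℝ) (hv : ∀ n, Measurable (v n)) (hv1 : ∀ n x, v n x ∈ Set.Icc (0 : ℝ) 1)
    (hvm : ∀ n, Monotone (v n))
    (δ : ℕ → ℝ) (hδ0 : ∀ n, 0 ≤ δ n) (hδ : Tendsto δ atTop (𝓝 0))
    (hP : ∀ n z, |∫ y, v n y ∂(P z) - v n z| ≤ δ n)
    (h : ∀ x y : E, ∃ A B : Set E, MeasurableSet A ∧ MeasurableSet B ∧
      (∀ a ∈ A, ∀ b ∈ B, a ≤ b) ∧
      (∃ (Ω : Type) (_ : MeasurableSpace Ω) (μ : Measure Ω) (X : ℕ → Ω → E),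
        IsMChain P x μ X ∧ ∀ᵐ ω ∂μ, ∃ n, X n ω ∈ A) ∧
      (∃ (Ω : Type) (_ : MeasurableSpace Ω) (μ : Measure Ω) (X : ℕ → Ω → E),
        IsMChain P y μ X ∧ ∀ᵐ ω ∂μ, ∃ n, X n ω ∈ B))
    (x y : E) (ε : ℝ) (hε : 0 < ε) : ∀ᶠ n in atTop, v n x - v n y < ε := by
  obtain ⟨A, B, hA, hB, hAB, ⟨Ω, _, μ, X, hX, hXA⟩, ⟨Ω', _, μ', Y, hY, hYB⟩⟩ := h x y
  have := hX.1
  have := hY.1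
  have hAne : A.Nonempty := by
    obtain ⟨ω, n, hn⟩ := hXA.exists
    exact ⟨_, hn⟩
  have hBne : B.Nonempty := by
    obtain ⟨ω, n, hn⟩ := hYB.exists
    exact ⟨_, hn⟩
  have t1 := noHit_tendsto μ X hX.2.1 A hA hXA
  have t2 := noHit_tendsto μ' Y hY.2.1 B hB hYB
  obtain ⟨m, hm1, hm2⟩ := ((t1.eventually_lt_const (show (0:ℝ) < ε / 4 by linarith)).and
    (t2.eventually_lt_const (show (0:ℝ) < ε / 4 by linarith))).exists
  have t3 : Tendsto (fun n => (m : ℝ) * δ n) atTop (𝓝 0) := by simpa using hδ.const_mul (m : ℝ)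
  filter_upwards [t3.eventually_lt_const (show (0:ℝ) < ε / 4 by linarith)] with n hn
  obtain ⟨a, ha⟩ := hAne
  obtain ⟨b, hb⟩ := hBne
  have hbdd : BddAbove (v n '' A) := ⟨1, by rintro _ ⟨z, -, rfl⟩; exact (hv1 n z).2⟩
  set c := sSup (v n '' A) with hc
  have hcA : ∀ z ∈ A, v n z ≤ c := fun z hz => le_csSup hbdd ⟨z, hz, rfl⟩
  have hcB : ∀ z ∈ B, c ≤ v n z := fun z hz =>
    csSup_le ⟨_, a, ha, rfl⟩ (by rintro _ ⟨w, hw, rfl⟩; exact hvm n (hAB w hw z hz))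
  have hc0 : 0 ≤ c := (hv1 n a).1.trans (hcA a ha)
  have hc1 : c ≤ 1 := (hcB b hb).trans (hv1 n b).2
  have b1 := chain_bound P x μ X hX A hA (v n) (hv n) (hv1 n) c (δ n) hc0 (hδ0 n) hcA
    (fun z => by have := (abs_le.1 (hP n z)).1; linarith) m
  have b2 := chain_bound P y μ' Y hY B hB (fun z => 1 - v n z) (measurable_const.sub (hv n))
    (fun z => ⟨by linarith [(hv1 n z).2], by linarith [(hv1 n z).1]⟩) (1 - c) (δ n)
    (by linarith) (hδ0 n) (fun z hz => by linarith [hcB z hz])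
    (fun z => by
      rw [integral_sub (integrable_const _)
        (Integrable.of_mem_Icc 0 1 (hv n).aemeasurable (ae_of_all _ (hv1 n)))]
      have := (abs_le.1 (hP n z)).2
      simp
      linarith) m
  linarith

/-- Iterates of the kernel on functions. -/
noncomputable def kit {E : Type*} [MeasurableSpace E] (P : Kernel E E) (g : E → ℝ) : ℕ → E → ℝ
  | 0 => g
  | n + 1 => fun x => ∫ y, kit P g n y ∂(P x)

theorem stat_upper {E : Type*} [MeasurableSpace E] [PartialOrder E]
    (P : Kernel E E) [IsMarkovKernel P] (hmono : MonotoneKernel P)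
    (h : ∀ x y : E, ∃ A B : Set E, MeasurableSet A ∧ MeasurableSet B ∧
      (∀ a ∈ A, ∀ b ∈ B, a ≤ b) ∧
      (∃ (Ω : Type) (_ : MeasurableSpace Ω) (μ : Measure Ω) (X : ℕ → Ω → E),
        IsMChain P x μ X ∧ ∀ᵐ ω ∂μ, ∃ n, X n ω ∈ A) ∧
      (∃ (Ω : Type) (_ : MeasurableSpace Ω) (μ : Measure Ω) (X : ℕ → Ω → E),
        IsMChain P y μ X ∧ ∀ᵐ ω ∂μ, ∃ n, X n ω ∈ B))
    (π₁ π₂ : Measure E) [IsProbabilityMeasure π₁] [IsProbabilityMeasure π₂]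
    (h1 : π₁.bind (fun a => P a) = π₁) (h2 : π₂.bind (fun a => P a) = π₂)
    (g : E → ℝ) (hg : Measurable g) (hg1 : ∀ x, g x ∈ Set.Icc (0 : ℝ) 1) (hgm : Monotone g) :
    ∫ x, g x ∂π₁ = ∫ x, g x ∂π₂ := by
  have kprop : ∀ n, Measurable (kit P g n) ∧ (∀ x, kit P g n x ∈ Set.Icc (0 : ℝ) 1) ∧
      Monotone (kit P g n) := by
    intro n
    induction n with
    | zero => exact ⟨hg, hg1, hgm⟩
    | succ n ih =>
      obtain ⟨i1, i2, i3⟩ := ih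
      refine ⟨(i1.stronglyMeasurable.integral_kernel).measurable, fun x => ⟨?_, ?_⟩,
        hmono _ i1 i3 i2⟩
      · exact integral_nonneg fun y => (i2 y).1
      · calc ∫ y, kit P g n y ∂(P x) ≤ ∫ y, (1 : ℝ) ∂(P x) :=
            integral_mono (Integrable.of_mem_Icc 0 1 i1.aemeasurable (ae_of_all _ i2))
              (integrable_const _) fun y => (i2 y).2
          _ = 1 := by simp
  have kint : ∀ n (ρ : Measure E) [IsFiniteMeasure ρ], Integrable (kit P g n) ρ := fun n ρ _ =>
    Integrable.of_mem_Icc 0 1 (kprop n).1.aemeasurable (ae_of_all _ (kprop n).2.1)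
  have kstat : ∀ π : Measure E, IsProbabilityMeasure π → π.bind (fun a => P a) = π →
      ∀ n, ∫ x, kit P g n x ∂π = ∫ x, g x ∂π := by
    intro π hπ hs n
    induction n with
    | zero => rfl
    | succ n ih =>
      rw [← ih]
      have := integral_bind_kernel P π (kit P g n) (kprop n).1 (kprop n).2.1
      rw [hs] at this
      exact this.symm
  -- Cesaro averages
  let v : ℕ → E → ℝ := fun n x => ((n : ℝ) + 1)⁻¹ * ∑ k ∈ Finset.range (n + 1), kit P g k x
  have hpos : ∀ n : ℕ, (0 : ℝ) < ((n : ℝ) + 1)⁻¹ := fun n => by positivity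
  have vmeas : ∀ n, Measurable (v n) := fun n =>
    (Finset.measurable_fun_sum _ fun k _ => (kprop k).1).const_mul _
  have v01 : ∀ n x, v n x ∈ Set.Icc (0 : ℝ) 1 := by
    intro n x
    refine ⟨mul_nonneg (hpos n).le (Finset.sum_nonneg fun k _ => ((kprop k).2.1 x).1), ?_⟩
    have : ∑ k ∈ Finset.range (n + 1), kit P g k x ≤ ∑ k ∈ Finset.range (n + 1), (1 : ℝ) :=
      Finset.sum_le_sum fun k _ => ((kprop k).2.1 x).2
    simp only [Finset.sum_const, Finset.card_range, nsmul_eq_mul, mul_one] at this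
    push_cast at this
    calc v n x ≤ ((n : ℝ) + 1)⁻¹ * ((n : ℝ) + 1) := mul_le_mul_of_nonneg_left this (hpos n).le
      _ = 1 := inv_mul_cancel₀ (by positivity)
  have vmono : ∀ n, Monotone (v n) := fun n x y hxy =>
    mul_le_mul_of_nonneg_left (Finset.sum_le_sum fun k _ => (kprop k).2.2 hxy) (hpos n).le
  have vP : ∀ n z, |∫ y, v n y ∂(P z) - v n z| ≤ ((n : ℝ) + 1)⁻¹ := by
    intro n z
    have e : ∫ y, v n y ∂(P z) - v n z = ((n : ℝ) + 1)⁻¹ * (kit P g (n + 1) z - kit P g 0 z) := by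
      simp only [v]
      rw [integral_const_mul, integral_finsetSum _ fun k _ => kint k _, ← mul_sub,
        ← Finset.sum_sub_distrib]
      congr 1
      exact Finset.sum_range_sub (fun k => kit P g k z) (n + 1)
    rw [e, abs_mul, abs_of_pos (hpos n)]
    refine mul_le_of_le_one_right (hpos n).le ?_
    have a1 := (kprop (n + 1)).2.1 z
    have a2 := (kprop 0).2.1 z
    rw [abs_le]
    constructor <;> linarith [a1.1, a1.2, a2.1, a2.2]
  have hδ : Tendsto (fun n : ℕ => ((n : ℝ) + 1)⁻¹) atTop (𝓝 0) := by
    simpa using tendsto_one_div_add_atTop_nhds_zero_nat (𝕜 := ℝ)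
  have hle := ces_diff_le P v vmeas v01 vmono _ (fun n => (hpos n).le) hδ vP h
  have hlim : ∀ p : E × E, Tendsto (fun n => v n p.1 - v n p.2) atTop (𝓝 0) := by
    rintro ⟨x, y⟩
    rw [Metric.tendsto_nhds]
    intro ε hε
    filter_upwards [hle x y ε hε, hle y x ε hε] with n n1 n2
    rw [Real.dist_eq, sub_zero, abs_lt]
    constructor <;> linarith
  have hD : Tendsto (fun n => ∫ p, (v n p.1 - v n p.2) ∂(π₁.prod π₂)) atTop
      (𝓝 (∫ _p, (0 : ℝ) ∂(π₁.prod π₂))) := by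
    refine tendsto_integral_of_dominated_convergence (fun _ => (1 : ℝ)) (fun n => ?_)
      (integrable_const _) (fun n => ae_of_all _ fun p => ?_) (ae_of_all _ hlim)
    · exact (((vmeas n).comp measurable_fst).sub
        ((vmeas n).comp measurable_snd)).aestronglyMeasurable
    · have a1 := v01 n p.1
      have a2 := v01 n p.2
      rw [Real.norm_eq_abs, abs_le]
      constructor <;> linarith [a1.1, a1.2, a2.1, a2.2]
  have vstat : ∀ π : Measure E, IsProbabilityMeasure π → π.bind (fun a => P a) = π →
      ∀ n, ∫ x, v n x ∂π = ∫ x, g x ∂π := by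
    intro π hπ hs n
    simp only [v]
    rw [integral_const_mul, integral_finsetSum _ fun k _ => kint k _,
      Finset.sum_congr rfl fun k _ => kstat π hπ hs k]
    simp only [Finset.sum_const, Finset.card_range, nsmul_eq_mul]
    push_cast
    field_simp
  have hconst : ∀ n, ∫ p, (v n p.1 - v n p.2) ∂(π₁.prod π₂) = ∫ x, g x ∂π₁ - ∫ x, g x ∂π₂ := by
    intro n
    have vi : ∀ (π : Measure E) [IsProbabilityMeasure π], Integrable (v n) π := fun π _ =>
      Integrable.of_mem_Icc 0 1 (vmeas n).aemeasurable (ae_of_all _ (v01 n))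
    rw [integral_sub ((vi π₁).comp_fst π₂) ((vi π₂).comp_snd π₁), integral_fun_fst (v n),
      integral_fun_snd (v n), vstat π₁ inferInstance h1 n, vstat π₂ inferInstance h2 n]
    simp
  simp_rw [hconst] at hD
  have := tendsto_nhds_unique hD tendsto_const_nhds
  simp only [integral_zero] at this
  linarith

/-- Theorem 5.1: if for all `x, y` there are Borel sets `A_{x,y} ⪯ B_{x,y}`
such that the chain from `x` hits `A_{x,y}` a.s. and the chain from `y` hits `B_{x,y}`
a.s., then the monotone kernel `P` possesses at most one stationary distribution. -/
theorem stmt16 {E : Type*} [MetricSpace E] [PolishSpace E] [MeasurableSpace E] [BorelSpace E]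
    [PartialOrder E] [OrderClosedTopology E]
    (P : Kernel E E) [IsMarkovKernel P] (hmono : MonotoneKernel P)
    (h : ∀ x y : E, ∃ A B : Set E, MeasurableSet A ∧ MeasurableSet B ∧
      (∀ a ∈ A, ∀ b ∈ B, a ≤ b) ∧
      (∃ (Ω : Type) (_ : MeasurableSpace Ω) (μ : Measure Ω) (X : ℕ → Ω → E),
        IsMChain P x μ X ∧ ∀ᵐ ω ∂μ, ∃ n, X n ω ∈ A) ∧
      (∃ (Ω : Type) (_ : MeasurableSpace Ω) (μ : Measure Ω) (X : ℕ → Ω → E),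
        IsMChain P y μ X ∧ ∀ᵐ ω ∂μ, ∃ n, X n ω ∈ B)) :
    ∀ π₁ π₂ : Measure E, IsProbabilityMeasure π₁ → IsProbabilityMeasure π₂ →
      π₁.bind (fun a => P a) = π₁ → π₂.bind (fun a => P a) = π₂ → π₁ = π₂ := by
  intro π₁ π₂ hπ₁ hπ₂ h1 h2
  refine ext_upper π₁ π₂ fun J hJ hJu => ?_
  have := stat_upper P hmono h π₁ π₂ h1 h2 (J.indicator fun _ => 1)
    (measurable_const.indicator hJ) (fun x => by by_cases hx : x ∈ J <;> simp [hx]) (by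
      intro x y hxy
      by_cases hx : x ∈ J
      · simp [hx, hJu hxy hx]
      · by_cases hy : y ∈ J <;> simp [hx, hy])
  rw [integral_indicator_const _ hJ, integral_indicator_const _ hJ] at this
  simp only [smul_eq_mul, mul_one, Measure.real] at this
  exact (ENNReal.toReal_eq_toReal_iff' (measure_ne_top _ _) (measure_ne_top _ _)).1 this
end

section
/- Let E be an ordered Polish space and P a monotone Markov kernel on E. For any finite or countable sequence x₁ ⪯ x₂ ⪯ … ⪯ x_k ⪯ … of elements of E, there exists a coupling on a common probability space of the Markov chains X^{x₁}, X^{x₂}, …, X^{x_k}, … (each with kernel P and the indicated initial state) such that Xₙ^{x₁} ⪯ Xₙ^{x₂} ⪯ … ⪯ Xₙ^{x_k} ⪯ … almost surely, for all n ≥ 0. -/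
open MeasureTheory ProbabilityTheory Filter Topology

lemma integral_le_of_levels {K : Type*} [TopologicalSpace K] [CompactSpace K]
    [MeasurableSpace K] [BorelSpace K]
    (μ ν : Measure K) [IsProbabilityMeasure μ] [IsProbabilityMeasure ν]
    (a v : C(K, ℝ)) (h : ∀ t : ℝ, μ {x | t ≤ a x} ≤ ν {x | t ≤ v x}) :
    ∫ x, a x ∂μ ≤ ∫ x, v x ∂ν := by
  have ia : Integrable (fun x => a x) μ := (BoundedContinuousFunction.mkOfCompact a).integrable μ
  have iv : Integrable (fun x => v x) ν := (BoundedContinuousFunction.mkOfCompact v).integrable ν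
  obtain ⟨c, hca, hcv⟩ : ∃ c : ℝ, (∀ x, 0 ≤ a x + c) ∧ (∀ x, 0 ≤ v x + c) := by
    refine ⟨‖a‖ + ‖v‖, fun x => ?_, fun x => ?_⟩
    · have := (abs_le.1 (a.norm_coe_le_norm x)).1
      have := norm_nonneg v
      linarith
    · have := (abs_le.1 (v.norm_coe_le_norm x)).1
      have := norm_nonneg a
      linarith
  have key : ∫ x, (a x + c) ∂μ ≤ ∫ x, (v x + c) ∂ν := by
    rw [integral_eq_lintegral_of_nonneg_ae (.of_forall hca) (by fun_prop),
      integral_eq_lintegral_of_nonneg_ae (.of_forall hcv) (by fun_prop)]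
    apply ENNReal.toReal_mono
    · exact ((iv.add (integrable_const c)).lintegral_lt_top).ne
    · rw [lintegral_eq_lintegral_meas_le μ (.of_forall hca) (by fun_prop),
        lintegral_eq_lintegral_meas_le ν (.of_forall hcv) (by fun_prop)]
      apply lintegral_mono
      intro t
      have := h (t - c)
      simpa only [sub_le_iff_le_add] using this
  rw [integral_add ia (integrable_const c), integral_add iv (integrable_const c)] at key
  simpa using key

lemma strassen_compact {K : Type*} [TopologicalSpace K] [CompactSpace K]
    [TopologicalSpace.MetrizableSpace K]
    [MeasurableSpace K] [BorelSpace K]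
    (μ ν : Measure K) [IsProbabilityMeasure μ] [IsProbabilityMeasure ν]
    (R : Set (K × K)) (hR : IsClosed R)
    (h : ∀ A, IsClosed A → μ A ≤ ν {y | ∃ x ∈ A, (x, y) ∈ R}) :
    ∃ π : Measure (K × K), IsProbabilityMeasure π ∧ π.map Prod.fst = μ ∧
      π.map Prod.snd = ν ∧ π Rᶜ = 0 := by
  let _ : MetricSpace K := TopologicalSpace.metrizableSpaceMetric K
  have hRne : R.Nonempty := by
    by_contra hne
    rw [Set.not_nonempty_iff_eq_empty] at hne
    have := h Set.univ isClosed_univ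
    simp [hne] at this
  let pf : C(K, ℝ) →ₗ[ℝ] C(K × K, ℝ) :=
    { toFun := fun u => u.comp ⟨Prod.fst, continuous_fst⟩
      map_add' := fun _ _ => rfl
      map_smul' := fun _ _ => rfl }
  let ps : C(K, ℝ) →ₗ[ℝ] C(K × K, ℝ) :=
    { toFun := fun u => u.comp ⟨Prod.snd, continuous_snd⟩
      map_add' := fun _ _ => rfl
      map_smul' := fun _ _ => rfl }
  have hint : ∀ (ρ : Measure (K × K)) [IsProbabilityMeasure ρ] (f : C(K × K, ℝ)),
      Integrable (fun x => f x) ρ :=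
    fun ρ _ f => (BoundedContinuousFunction.mkOfCompact f).integrable ρ
  let I : C(K × K, ℝ) →ₗ[ℝ] ℝ :=
    { toFun := fun f => ∫ z, f z ∂(μ.prod ν)
      map_add' := fun f g => integral_add (hint _ f) (hint _ g)
      map_smul' := fun c f => integral_const_mul c _ }
  let V : Submodule ℝ C(K × K, ℝ) := LinearMap.range pf ⊔ LinearMap.range ps
  let s : PointedCone ℝ C(K × K, ℝ) :=
    { carrier := {f | ∀ z ∈ R, 0 ≤ f z}
      add_mem' := fun hf hg z hz => add_nonneg (hf z hz) (hg z hz)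
      zero_mem' := fun z hz => le_rfl
      smul_mem' := fun c f hf z hz => mul_nonneg c.2 (hf z hz) }
  have hIf : ∀ u : C(K, ℝ), I (pf u) = ∫ x, u x ∂μ := by
    intro u
    change ∫ z : K × K, u z.1 ∂(μ.prod ν) = _
    rw [integral_fun_fst]; simp
  have hIs : ∀ u : C(K, ℝ), I (ps u) = ∫ x, u x ∂ν := by
    intro u
    change ∫ z : K × K, u z.2 ∂(μ.prod ν) = _
    rw [integral_fun_snd]; simp
  obtain ⟨g, hg, hgpos⟩ := riesz_extension s ⟨V, I.domRestrict V⟩ (by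
    rintro ⟨f, hf⟩ hfs
    obtain ⟨_, ⟨u, rfl⟩, _, ⟨v, rfl⟩, rfl⟩ := Submodule.mem_sup.1 hf
    change 0 ≤ I (pf u + ps v)
    rw [map_add, hIf, hIs]
    have hle : ∫ x, (-u) x ∂μ ≤ ∫ x, v x ∂ν := by
      apply integral_le_of_levels
      intro t
      refine (h _ (isClosed_le continuous_const (-u).continuous)).trans (measure_mono ?_)
      rintro y ⟨x, hx, hxy⟩
      have h1 : 0 ≤ u x + v y := hfs (x, y) hxy
      have h2 : t ≤ - u x := hx
      change t ≤ v y
      linarith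
    have : ∫ x, (-u) x ∂μ = - ∫ x, u x ∂μ := integral_neg _
    linarith) (by
    intro y
    refine ⟨⟨pf (ContinuousMap.const _ ‖y‖), Submodule.mem_sup_left ⟨_, rfl⟩⟩, ?_⟩
    intro z hz
    have := (abs_le.1 (y.norm_coe_le_norm z)).1
    change 0 ≤ ‖y‖ + y z
    linarith)
  have hgf : ∀ u, g (pf u) = ∫ x, u x ∂μ := fun u => by
    rw [← hIf]; exact hg ⟨pf u, Submodule.mem_sup_left ⟨_, rfl⟩⟩
  have hgs : ∀ u, g (ps u) = ∫ x, u x ∂ν := fun u => by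
    rw [← hIs]; exact hg ⟨ps u, Submodule.mem_sup_right ⟨_, rfl⟩⟩
  let Λ0 : CompactlySupportedContinuousMap (K × K) ℝ →ₗ[ℝ] ℝ :=
    { toFun := fun f => g f.toContinuousMap
      map_add' := fun f f' => g.map_add f.toContinuousMap f'.toContinuousMap
      map_smul' := fun c f => g.map_smul c f.toContinuousMap }
  let Λ : CompactlySupportedContinuousMap (K × K) ℝ →ₚ[ℝ] ℝ :=
    PositiveLinearMap.mk₀ Λ0 (fun f hf => hgpos _ (fun z _ => hf z))
  let π := RealRMK.rieszMeasure Λ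
  have hπ : ∀ f : C(K × K, ℝ), ∫ z, f z ∂π = g f := fun f =>
    RealRMK.integral_rieszMeasure Λ (CompactlySupportedContinuousMap.continuousMapEquiv f)
  have hfin : IsFiniteMeasure π := ⟨by
    have : IsFiniteMeasureOnCompacts π := by
      unfold π; infer_instance
    exact isCompact_univ.measure_lt_top⟩
  have hprob : IsProbabilityMeasure π := by
    have h1 := hπ (pf (ContinuousMap.const _ 1))
    rw [hgf] at h1
    have h2 : π.real Set.univ = 1 := by simpa [pf] using h1
    constructor
    rw [measureReal_def] at h2
    rw [← ENNReal.toReal_eq_one_iff]; exact h2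
  refine ⟨π, hprob, ?_, ?_, ?_⟩
  · have := Measure.isProbabilityMeasure_map (μ := π) measurable_fst.aemeasurable
    apply ext_of_forall_integral_eq_of_IsFiniteMeasure
    intro f
    rw [integral_map (by fun_prop) (by fun_prop)]
    exact (hπ (pf f.toContinuousMap)).trans (hgf f.toContinuousMap)
  · have := Measure.isProbabilityMeasure_map (μ := π) measurable_snd.aemeasurable
    apply ext_of_forall_integral_eq_of_IsFiniteMeasure
    intro f
    rw [integral_map (by fun_prop) (by fun_prop)]
    exact (hπ (ps f.toContinuousMap)).trans (hgs f.toContinuousMap)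
  · let dR : C(K × K, ℝ) := ⟨fun z => Metric.infDist z R, Metric.continuous_infDist_pt R⟩
    have h0 : ∫ z, dR z ∂π = 0 := by
      rw [hπ]
      apply le_antisymm
      · have := hgpos (-dR) (fun z hz => by
          change 0 ≤ - Metric.infDist z R
          rw [Metric.infDist_zero_of_mem hz]; simp)
        rw [map_neg] at this; linarith
      · exact hgpos dR (fun z hz => Metric.infDist_nonneg)
    replace h0 := (integral_eq_zero_iff_of_nonneg
      (f := fun z => dR z) (fun z => Metric.infDist_nonneg) (hint π dR)).1 h0
    refine measure_mono_null ?_ (ae_iff.1 h0)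
    intro z hz hz0
    exact hz ((hR.mem_iff_infDist_zero hRne).2 hz0)

lemma strassen_polish {F : Type*} [TopologicalSpace F] [PolishSpace F]
    [MeasurableSpace F] [BorelSpace F] [Preorder F] [OrderClosedTopology F]
    (μ ν : Measure F) [IsProbabilityMeasure μ] [IsProbabilityMeasure ν]
    (h : ∀ A, IsCompact A → μ A ≤ ν {y | ∃ x ∈ A, x ≤ y}) :
    ∃ π : Measure (F × F), IsProbabilityMeasure π ∧ π.map Prod.fst = μ ∧
      π.map Prod.snd = ν ∧ ∀ᵐ p ∂π, p.1 ≤ p.2 := by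
  obtain ⟨e, he⟩ : ∃ e : F → ℕ → unitInterval, IsEmbedding e := by
    let _ : MetricSpace F := TopologicalSpace.metrizableSpaceMetric F
    exact Metric.PiNatEmbed.exists_embedding_to_hilbert_cube
  have hme : MeasurableEmbedding e := he.continuous.measurableEmbedding he.injective
  have hne : Nonempty F := nonempty_of_isProbabilityMeasure μ
  obtain ⟨g, hgm, hge⟩ := hme.exists_measurable_extend measurable_id (fun _ => hne)
  have hge' : ∀ a, g (e a) = a := fun a => congrFun hge a
  let M : Set (F × F) := {p | p.1 ≤ p.2}
  have hM : IsClosed M := isClosed_le continuous_fst continuous_snd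
  have := Measure.isProbabilityMeasure_map (μ := μ) hme.measurable.aemeasurable
  have := Measure.isProbabilityMeasure_map (μ := ν) hme.measurable.aemeasurable
  obtain ⟨π, hπ, h1, h2, h3⟩ := strassen_compact (μ.map e) (ν.map e)
    (closure (Prod.map e e '' M)) isClosed_closure (by
      intro B hB
      rw [hme.map_apply]
      have hBm : MeasurableSet (e ⁻¹' B) := (hB.preimage he.continuous).measurableSet
      rw [hBm.measure_eq_iSup_isCompact]
      refine iSup_le fun A => iSup_le fun hA => iSup_le fun hAc => ?_
      refine (h A hAc).trans (le_trans (measure_mono ?_)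
        (Measure.le_map_apply hme.measurable.aemeasurable _))
      rintro y ⟨x, hx, hxy⟩
      exact ⟨e x, hA hx, subset_closure ⟨(x, y), hxy, rfl⟩⟩)
  have hr1 : ∀ᵐ p ∂π, p.1 ∈ Set.range e := by
    have : ∀ᵐ c ∂(π.map Prod.fst), c ∈ Set.range e := by
      rw [h1]
      exact (ae_map_iff (p := fun c => c ∈ Set.range e) hme.measurable.aemeasurable
        hme.measurableSet_range).2 (.of_forall fun a => ⟨a, rfl⟩)
    exact ae_of_ae_map measurable_fst.aemeasurable this
  have hr2 : ∀ᵐ p ∂π, p.2 ∈ Set.range e := by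
    have : ∀ᵐ c ∂(π.map Prod.snd), c ∈ Set.range e := by
      rw [h2]
      exact (ae_map_iff (p := fun c => c ∈ Set.range e) hme.measurable.aemeasurable
        hme.measurableSet_range).2 (.of_forall fun a => ⟨a, rfl⟩)
    exact ae_of_ae_map measurable_snd.aemeasurable this
  have hgg : Measurable (Prod.map g g) := hgm.prodMap hgm
  refine ⟨π.map (Prod.map g g), Measure.isProbabilityMeasure_map hgg.aemeasurable, ?_, ?_, ?_⟩
  · rw [Measure.map_map measurable_fst hgg]
    change π.map (g ∘ Prod.fst) = μ
    rw [← Measure.map_map hgm measurable_fst, h1, Measure.map_map hgm hme.measurable, hge,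
      Measure.map_id]
  · rw [Measure.map_map measurable_snd hgg]
    change π.map (g ∘ Prod.snd) = ν
    rw [← Measure.map_map hgm measurable_snd, h2, Measure.map_map hgm hme.measurable, hge,
      Measure.map_id]
  · rw [ae_map_iff hgg.aemeasurable hM.measurableSet]
    have h3' : ∀ᵐ p ∂π, p ∈ closure (Prod.map e e '' M) := by
      rw [ae_iff]; exact h3
    filter_upwards [hr1, hr2, h3'] with p hp1 hp2 hp3
    obtain ⟨c, d⟩ := p
    obtain ⟨a, rfl⟩ := hp1
    obtain ⟨b, rfl⟩ := hp2
    have : (a, b) ∈ closure M := by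
      rw [(he.prodMap he).closure_eq_preimage_closure_image]
      exact hp3
    rw [hM.closure_eq] at this
    change g (e a) ≤ g (e b)
    rw [hge', hge']
    exact this

/-- `m` is a law on sequences with one-step kernels `κ n`. -/
def SeqStep {S : Type*} [MeasurableSpace S] (κ : ℕ → Kernel S S) (m : Measure (ℕ → S)) : Prop :=
  ∀ (n : ℕ) (f : (Fin (n + 1) → S) × S → ENNReal), Measurable f →
    ∫⁻ z, f (fun i => z i, z (n + 1)) ∂m = ∫⁻ z, ∫⁻ y, f (fun i => z i, y) ∂(κ n (z n)) ∂m

lemma exists_seqStep {S : Type*} [MeasurableSpace S] (κ : ℕ → Kernel S S)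
    [∀ n, IsMarkovKernel (κ n)] (μ0 : Measure S) [IsProbabilityMeasure μ0] :
    ∃ m : Measure (ℕ → S), IsProbabilityMeasure m ∧ m.map (fun z => z 0) = μ0 ∧
      SeqStep κ m := by
  let κ' : (n : ℕ) → Kernel ((i : Finset.Iic n) → S) S := fun n =>
    (κ n).comap (fun w => w ⟨n, by simp⟩) (measurable_pi_apply _)
  have : ∀ n, IsMarkovKernel (κ' n) := fun n => by unfold κ'; infer_instance
  let T := Kernel.traj (X := fun _ => S) κ' 0
  let c : S → ((i : Finset.Iic 0) → S) := fun s _ => s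
  have hc : Measurable c := by fun_prop
  have := Measure.isProbabilityMeasure_map (μ := μ0) hc.aemeasurable
  refine ⟨(μ0.map c).bind T, inferInstance, ?_, ?_⟩
  · ext A hA
    rw [Measure.map_apply (by fun_prop) hA,
      Measure.bind_apply (measurable_pi_apply 0 hA) T.measurable.aemeasurable,
      lintegral_map (T.measurable_coe (measurable_pi_apply 0 hA)) hc,
      ← lintegral_indicator_one hA]
    refine lintegral_congr fun s => ?_
    have h1 := Kernel.traj_map_frestrictLe_apply (X := fun _ => S) (κ := κ') 0 0 (c s)
    rw [Kernel.partialTraj_self, Kernel.id_apply] at h1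
    have hB : MeasurableSet {w : (i : Finset.Iic 0) → S | w ⟨0, by simp⟩ ∈ A} :=
      measurable_pi_apply (⟨0, by simp⟩ : Finset.Iic 0) hA
    have h2 := congrArg (fun ρ => ρ {w | w ⟨0, by simp⟩ ∈ A}) h1
    rw [Measure.map_apply (Preorder.measurable_frestrictLe 0) hB, Measure.dirac_apply' _ hB] at h2
    exact h2
  · intro n f hf
    have hL : Measurable fun z : ℕ → S => f (fun i : Fin (n + 1) => z i, z (n + 1)) := by fun_prop
    have hin : Measurable fun v : Fin (n + 1) → S => ∫⁻ y, f (v, y) ∂(κ n (v (Fin.last n))) := by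
      exact Measurable.lintegral_kernel_prod_right'
        (κ := (κ n).comap (fun v : Fin (n + 1) → S => v (Fin.last n)) (measurable_pi_apply _)) hf
    have hRm : Measurable fun z : ℕ → S =>
        ∫⁻ y, f (fun i : Fin (n + 1) => z i, y) ∂(κ n (z n)) :=
      hin.comp (g := fun v : Fin (n + 1) → S => ∫⁻ y, f (v, y) ∂(κ n (v (Fin.last n))))
        (f := fun (z : ℕ → S) (i : Fin (n + 1)) => z i) (by fun_prop)
    rw [Measure.lintegral_bind T.measurable.aemeasurable hL.aemeasurable,
      Measure.lintegral_bind T.measurable.aemeasurable hRm.aemeasurable]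
    refine lintegral_congr fun u => ?_
    let r : ((i : Finset.Iic n) → S) → (Fin (n + 1) → S) :=
      fun w i => w ⟨i.1, by simpa using Nat.lt_succ_iff.1 i.2⟩
    have hr : Measurable r := by fun_prop
    have hf' : Measurable fun p : ((i : Finset.Iic n) → S) × S => f (r p.1, p.2) := by fun_prop
    have h1 := Kernel.partialTraj_compProd_eq_map_traj (X := fun _ => S) (κ := κ')
      (Nat.zero_le n) (x₀ := u)
    have h2 := congrArg (fun ρ => ∫⁻ p, f (r p.1, p.2) ∂ρ) h1
    rw [Measure.lintegral_compProd hf', lintegral_map hf' (by fun_prop),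
      ← Kernel.traj_map_frestrictLe_apply, lintegral_map ?_ (by fun_prop)] at h2
    · exact h2.symm
    · exact hf'.lintegral_kernel_prod_right' 

lemma MonotoneKernel.lintegral_le {E : Type*} [MeasurableSpace E] [Preorder E] {P : Kernel E E}
    [IsMarkovKernel P] (hP : MonotoneKernel P) (g : E → ENNReal) (hg : Measurable g)
    (hm : Monotone g) (h1 : ∀ x, g x ≤ 1) {x y : E} (hxy : x ≤ y) :
    ∫⁻ z, g z ∂(P x) ≤ ∫⁻ z, g z ∂(P y) := by
  have hfin : ∀ z, g z ≠ ⊤ := fun z => ((h1 z).trans_lt ENNReal.one_lt_top).ne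
  have h := hP (fun z => (g z).toReal) hg.ennreal_toReal
    (fun a b hab => ENNReal.toReal_mono (hfin b) (hm hab))
    (fun z => ⟨ENNReal.toReal_nonneg, by simpa using ENNReal.toReal_mono ENNReal.one_ne_top (h1 z)⟩)
    hxy
  have hI : ∀ w, ∫⁻ z, g z ∂(P w) ≠ ⊤ := fun w => by
    refine ((lintegral_mono h1).trans_lt ?_).ne
    simp
  simp only at h
  rw [integral_toReal hg.aemeasurable (.of_forall fun z => (hfin z).lt_top),
    integral_toReal hg.aemeasurable (.of_forall fun z => (hfin z).lt_top)] at h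
  exact (ENNReal.toReal_le_toReal (hI x) (hI y)).1 h

lemma seq_dom {E : Type*} [MeasurableSpace E] [Preorder E] {P : Kernel E E}
    [IsMarkovKernel P] (hP : MonotoneKernel P) {x x' : E} (hxx : x ≤ x')
    (m m' : Measure (ℕ → E)) (h0 : m.map (fun z => z 0) = Measure.dirac x)
    (h0' : m'.map (fun z => z 0) = Measure.dirac x')
    (hm : SeqStep (fun _ => P) m) (hm' : SeqStep (fun _ => P) m') (n : ℕ) :
    ∀ g : (Fin (n + 1) → E) → ENNReal, Measurable g → Monotone g → (∀ v, g v ≤ 1) →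
      ∫⁻ z, g (fun i => z i) ∂m ≤ ∫⁻ z, g (fun i => z i) ∂m' := by
  induction n with
  | zero =>
    intro g hg hgm _
    have key : ∀ (ρ : Measure (ℕ → E)) (a : E), ρ.map (fun z => z 0) = Measure.dirac a →
        ∫⁻ z, g (fun i => z i) ∂ρ = g (fun _ => a) := by
      intro ρ a ha
      have hgg : Measurable fun b : E => g (fun _ => b) := by fun_prop
      rw [← lintegral_dirac' a hgg, ← ha, lintegral_map hgg (by fun_prop)]
      refine lintegral_congr fun z => ?_
      congr 1
      ext i
      have : i = 0 := Fin.fin_one_eq_zero i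
      subst this
      rfl
    rw [key m x h0, key m' x' h0']
    exact hgm fun _ => hxx
  | succ n ih =>
    intro g hg hgm hg1
    let sn : (Fin (n + 1) → E) × E → (Fin (n + 2) → E) := fun p i =>
      if h : i.1 < n + 1 then p.1 ⟨i.1, h⟩ else p.2
    have hsn : Measurable sn := by
      refine measurable_pi_iff.2 fun i => ?_
      by_cases h : i.1 < n + 1
      · simp only [sn, h, dite_true]; fun_prop
      · simp only [sn, h, dite_false]; fun_prop
    have hsm : Monotone sn := by
      intro p q hpq i
      by_cases h : i.1 < n + 1
      · simp only [sn, h, dite_true]; exact hpq.1 _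
      · simp only [sn, h, dite_false]; exact hpq.2
    have hrec : ∀ z : ℕ → E, (fun i : Fin (n + 2) => z i) = sn (fun i => z i, z (n + 1)) := by
      intro z
      ext i
      by_cases h : i.1 < n + 1
      · simp only [sn, h, dite_true]
      · simp only [sn, h, dite_false]
        congr 1
        have := i.2
        omega
    let Tg : (Fin (n + 1) → E) → ENNReal := fun v => ∫⁻ y, g (sn (v, y)) ∂(P (v (Fin.last n)))
    have hTm : Measurable Tg :=
      Measurable.lintegral_kernel_prod_right'
        (κ := P.comap (fun v : Fin (n + 1) → E => v (Fin.last n)) (measurable_pi_apply _))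
        (hg.comp hsn)
    have key : ∀ ρ : Measure (ℕ → E), SeqStep (fun _ => P) ρ →
        ∫⁻ z, g (fun i => z i) ∂ρ = ∫⁻ z, Tg (fun i => z i) ∂ρ := by
      intro ρ hρ
      have := hρ n (g ∘ sn) (hg.comp hsn)
      simp only [hrec]
      exact this
    rw [key m hm, key m' hm']
    refine ih Tg hTm ?_ ?_
    · intro v w hvw
      refine (lintegral_mono fun y => hgm (hsm (Prod.mk_le_mk.2 ⟨hvw, le_refl y⟩))).trans ?_
      refine hP.lintegral_le (fun y => g (sn (w, y))) (by fun_prop) ?_ (fun _ => hg1 _) (hvw _)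
      intro a b hab
      exact hgm (hsm (Prod.mk_le_mk.2 ⟨le_rfl, hab⟩))
    · intro v
      refine (lintegral_mono fun y => hg1 _).trans ?_
      simp

lemma compact_dom {E : Type*} [TopologicalSpace E] [PolishSpace E] [MeasurableSpace E]
    [BorelSpace E] [Preorder E] [OrderClosedTopology E]
    (m m' : Measure (ℕ → E)) [IsProbabilityMeasure m] [IsProbabilityMeasure m']
    (hdom : ∀ n, ∀ g : (Fin (n + 1) → E) → ENNReal, Measurable g → Monotone g → (∀ v, g v ≤ 1) →
      ∫⁻ z, g (fun i => z i) ∂m ≤ ∫⁻ z, g (fun i => z i) ∂m')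
    (A : Set (ℕ → E)) (hA : IsCompact A) :
    m A ≤ m' {y | ∃ x ∈ A, x ≤ y} := by
  let pr : (n : ℕ) → (ℕ → E) → (Fin (n + 1) → E) := fun n z i => z i
  have hpr : ∀ n, Continuous (pr n) := fun n => by fun_prop
  let U : (n : ℕ) → Set (Fin (n + 1) → E) := fun n => {v | ∃ x ∈ A, pr n x ≤ v}
  have hproj : ∀ {G : Type _} [TopologicalSpace G] [Preorder G] [OrderClosedTopology G]
      (q : (ℕ → E) → G), Continuous q → IsClosed {v : G | ∃ x ∈ A, q x ≤ v} := by
    intro G _ _ _ q hq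
    have : CompactSpace A := isCompact_iff_compactSpace.1 hA
    have hcl : IsClosed {p : A × G | q p.1 ≤ p.2} :=
      isClosed_le (by fun_prop) continuous_snd
    have := isClosedMap_snd_of_compactSpace (X := A) (Y := G) _ hcl
    convert this using 1
    ext v
    constructor
    · rintro ⟨x, hx, hxv⟩
      exact ⟨(⟨x, hx⟩, v), hxv, rfl⟩
    · rintro ⟨⟨⟨x, hx⟩, w⟩, hxv, rfl⟩
      exact ⟨x, hx, hxv⟩
  have hU : ∀ n, IsClosed (U n) := fun n => hproj (pr n) (hpr n)
  have hstep : ∀ n, m A ≤ m' (pr n ⁻¹' U n) := by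
    intro n
    have h := hdom n ((U n).indicator 1) (measurable_one.indicator (hU n).measurableSet) (by
      intro v w hvw
      by_cases hv : v ∈ U n
      · have hw : w ∈ U n := by
          obtain ⟨x, hx, hxv⟩ := hv
          exact ⟨x, hx, hxv.trans hvw⟩
        simp [hv, hw]
      · simp [hv]) (fun v => Set.indicator_le_self' (by simp) v)
    have e : ∀ ρ : Measure (ℕ → E), ∫⁻ z, (U n).indicator 1 (fun i : Fin (n + 1) => z i) ∂ρ
        = ρ (pr n ⁻¹' U n) := by
      intro ρ
      rw [← lintegral_indicator_one ((hU n).preimage (hpr n)).measurableSet]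
      rfl
    rw [e, e] at h
    exact (measure_mono (fun x hx => ⟨x, hx, le_rfl⟩ : A ⊆ pr n ⁻¹' U n)).trans h
  have hanti : Antitone fun n => pr n ⁻¹' U n := by
    intro a b hab z hz
    obtain ⟨x, hx, hxz⟩ := hz
    exact ⟨x, hx, fun i => hxz ⟨i.1, by have := i.2; omega⟩⟩
  have hlim := tendsto_measure_iInter_atTop (μ := m')
    (fun n => ((hU n).preimage (hpr n)).measurableSet.nullMeasurableSet) hanti
    ⟨0, measure_ne_top _ _⟩
  refine (ge_of_tendsto' hlim hstep).trans (measure_mono ?_)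
  intro z hz
  rw [Set.mem_iInter] at hz
  let C : ℕ → Set (ℕ → E) := fun n => A ∩ {x | pr n x ≤ pr n z}
  have hC : ∀ n, IsClosed {x | pr n x ≤ pr n z} := fun n => isClosed_le (hpr n) continuous_const
  obtain ⟨x, hx⟩ := IsCompact.nonempty_iInter_of_sequence_nonempty_isCompact_isClosed C
    (fun n => by
      rintro x ⟨hx, hxz⟩
      exact ⟨hx, fun i => hxz ⟨i.1, by have := i.2; omega⟩⟩)
    (fun n => by
      obtain ⟨x, hx, hxz⟩ := hz n
      exact ⟨x, hx, hxz⟩)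
    (hA.inter_right (hC 0)) (fun n => hA.isClosed.inter (hC n))
  rw [Set.mem_iInter] at hx
  exact ⟨x, (hx 0).1, fun i => (hx i).2 (Fin.last i)⟩

lemma glue {F : Type*} [MeasurableSpace F] [StandardBorelSpace F] [Nonempty F]
    (m : ℕ → Measure F) [∀ k, IsProbabilityMeasure (m k)]
    (π : ℕ → Measure (F × F)) [∀ k, IsProbabilityMeasure (π k)]
    (h1 : ∀ k, (π k).map Prod.fst = m k) (h2 : ∀ k, (π k).map Prod.snd = m (k + 1)) :
    ∃ M : Measure (ℕ → F), IsProbabilityMeasure M ∧ (∀ k, M.map (fun z => z k) = m k) ∧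
      ∀ k, M.map (fun z => (z k, z (k + 1))) = π k := by
  obtain ⟨M, hM, hM0, hS⟩ := exists_seqStep (fun k => (π k).condKernel) (m 0)
  have hpair : ∀ k, M.map (fun z => z k) = m k → M.map (fun z => (z k, z (k + 1))) = π k := by
    intro k hk
    refine Measure.ext_of_lintegral _ fun f hf => ?_
    rw [lintegral_map hf (by fun_prop)]
    have := hS k (fun p => f (p.1 (Fin.last k), p.2)) (by fun_prop)
    simp only [Fin.val_last] at this
    rw [this]
    have hin : Measurable fun a => ∫⁻ y, f (a, y) ∂((π k).condKernel a) :=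
      hf.lintegral_kernel_prod_right'
    have hd : ∫⁻ p, f p ∂(π k) = ∫⁻ p, f p ∂((π k).fst ⊗ₘ (π k).condKernel) := by
      rw [(π k).disintegrate (π k).condKernel]
    rw [hd, Measure.lintegral_compProd hf, Measure.fst, h1, ← hk, lintegral_map hin (by fun_prop)]
  have hk : ∀ k, M.map (fun z => z k) = m k := by
    intro k
    induction k with
    | zero => exact hM0
    | succ k ih =>
      rw [← h2 k, ← hpair k ih, Measure.map_map measurable_snd (by fun_prop)]
      rfl
  exact ⟨M, hM, hk, fun k => hpair k (hk k)⟩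

lemma mcStep_of_seqStep {E : Type*} [MeasurableSpace E] {P : Kernel E E} [IsMarkovKernel P]
    (m : Measure (ℕ → E)) [IsProbabilityMeasure m] (hm : SeqStep (fun _ => P) m) :
    MCStep m (fun _ => P) (fun n z => z n) := by
  intro n A hA φ hφ hφ1
  have hPA : Measurable fun e => P e A := P.measurable_coe hA
  have hz : Measurable fun z : ℕ → E => φ (fun i : Fin (n + 1) => z i) := by fun_prop
  rw [integral_eq_lintegral_of_nonneg_ae, integral_eq_lintegral_of_nonneg_ae]
  · congr 1
    have := hm n (fun p => ENNReal.ofReal (φ p.1 * A.indicator (fun _ => (1 : ℝ)) p.2))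
      ((((hφ.comp measurable_fst).mul
        ((measurable_const.indicator hA).comp measurable_snd))).ennreal_ofReal)
    simp only at this
    rw [this]
    refine lintegral_congr fun z => ?_
    simp_rw [ENNReal.ofReal_mul (hφ1 _).1]
    rw [lintegral_const_mul _ (measurable_const.indicator hA).ennreal_ofReal,
      ENNReal.ofReal_toReal (measure_ne_top _ _), ← lintegral_indicator_one hA]
    congr 1
    refine lintegral_congr fun y => ?_
    by_cases hy : y ∈ A <;> simp [hy]
  · exact .of_forall fun z => mul_nonneg (hφ1 _).1 ENNReal.toReal_nonneg
  · exact (hz.mul (hPA.comp (measurable_pi_apply n)).ennreal_toReal).aestronglyMeasurable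
  · exact .of_forall fun z => mul_nonneg (hφ1 _).1
      (Set.indicator_nonneg (fun _ _ => zero_le_one) _)
  · exact (hz.mul ((measurable_const.indicator hA).comp
      (measurable_pi_apply (n + 1)))).aestronglyMeasurable

lemma mcStep_map {E Ω : Type*} [MeasurableSpace E] [MeasurableSpace Ω] {P : Kernel E E}
    [IsMarkovKernel P] (μ : Measure Ω) (Y : Ω → ℕ → E) (hY : Measurable Y)
    (h : MCStep (μ.map Y) (fun _ => P) (fun n z => z n)) :
    MCStep μ (fun _ => P) (fun n ω => Y ω n) := by
  intro n A hA φ hφ hφ1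
  have hPA : Measurable fun e => P e A := P.measurable_coe hA
  have hz : Measurable fun z : ℕ → E => φ (fun i : Fin (n + 1) => z i) := by fun_prop
  have := h n A hA φ hφ hφ1
  rw [integral_map hY.aemeasurable, integral_map hY.aemeasurable] at this
  · exact this
  · exact (hz.mul (hPA.comp (measurable_pi_apply n)).ennreal_toReal).aestronglyMeasurable
  · exact (hz.mul ((measurable_const.indicator hA).comp
      (measurable_pi_apply (n + 1)))).aestronglyMeasurable

/-- Proposition 2.2: for a monotone Markov kernel `P` and any (countable)
increasing sequence `x₁ ⪯ x₂ ⪯ …` of initial states, there is a coupling of the chains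
`X^{x₁}, X^{x₂}, …` on a common probability space such that
`Xₙ^{x₁} ⪯ Xₙ^{x₂} ⪯ …` almost surely, for all `n`. -/
theorem stmt19 {E : Type*} [MetricSpace E] [PolishSpace E] [MeasurableSpace E] [BorelSpace E]
    [PartialOrder E] [OrderClosedTopology E]
    (P : Kernel E E) [IsMarkovKernel P] (hmono : MonotoneKernel P)
    (x : ℕ → E) (hx : Monotone x) :
    ∃ (Ω : Type) (_ : MeasurableSpace Ω) (μ : Measure Ω) (X : ℕ → ℕ → Ω → E),
      (∀ k, IsMChain P (x k) μ (X k)) ∧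
      ∀ᵐ ω ∂μ, ∀ n k, X k n ω ≤ X (k + 1) n ω := by
  have hex := fun k => exists_seqStep (fun _ => P) (Measure.dirac (x k))
  choose m hm hm0 hmS using hex
  have hcoup := fun k => strassen_polish (m k) (m (k + 1))
    (compact_dom (m k) (m (k + 1)) (seq_dom hmono (hx (Nat.le_succ k)) (m k) (m (k + 1))
      (hm0 k) (hm0 (k + 1)) (hmS k) (hmS (k + 1))))
  choose π hπ h1 h2 hle using hcoup
  have : Nonempty E := ⟨x 0⟩
  obtain ⟨M, hM, hMk, hMp⟩ := glue m π h1 h2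
  obtain ⟨e, he⟩ := exists_measurableEmbedding_real (ℕ → ℕ → E)
  obtain ⟨g, hg, hge⟩ := he.exists_measurable_extend measurable_id (fun _ => inferInstance)
  have hμg : (M.map e).map g = M := by
    rw [Measure.map_map hg he.measurable, hge, Measure.map_id]
  have hgk : ∀ k, Measurable fun ω => g ω k := fun k => (measurable_pi_apply k).comp hg
  have hlaw : ∀ k, (M.map e).map (fun ω => g ω k) = m k := by
    intro k
    rw [← hMk k, ← hμg, Measure.map_map (measurable_pi_apply k) hg, hμg]
    rfl
  refine ⟨ℝ, inferInstance, M.map e, fun k n ω => g ω k n, fun k => ⟨?_, ?_, ?_, ?_⟩, ?_⟩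
  · exact Measure.isProbabilityMeasure_map he.measurable.aemeasurable
  · exact fun n => (measurable_pi_apply n).comp (hgk k)
  · have : ∀ᵐ c ∂((M.map e).map (fun ω => g ω k)).map (fun z => z 0), c = x k := by
      rw [hlaw, hm0]
      exact (ae_dirac_iff (p := fun c => c = x k) (measurableSet_singleton (x k))).2 rfl
    rw [Measure.map_map (measurable_pi_apply 0) (hgk k)] at this
    exact ae_of_ae_map ((measurable_pi_apply 0).comp (hgk k)).aemeasurable this
  · apply mcStep_map (M.map e) (fun ω => g ω k) (hgk k)
    rw [hlaw]
    exact mcStep_of_seqStep (m k) (hmS k)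
  · have hMle : ∀ᵐ z ∂M, ∀ k, z k ≤ z (k + 1) := by
      rw [ae_all_iff]
      intro k
      have := hle k
      rw [← hMp k] at this
      exact ae_of_ae_map (f := fun z : ℕ → ℕ → E => (z k, z (k + 1))) (by fun_prop) this
    rw [← hμg] at hMle
    filter_upwards [ae_of_ae_map hg.aemeasurable hMle] with ω hω n k
    exact hω k n
end
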